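/- Let T > 0, (Ω, ℱ, P) a complete probability space with filtration 𝔽 = (ℱ_t)_{t∈[0,T]}, λ Lebesgue measure on [0,T], and 𝒢 := {A ∈ ℬ([0,T])⊗ℱ : A_t ∈ ℱ_t for every t ∈ [0,T]}. Let L²_𝔽(0,T;R^l) be the Banach space of 𝒢-measurable processes y : [0,T]×Ω → R^l with E∫₀^T |y(t)|² dt < ∞, let U ⊆ R^l be a nonempty closed set, and 𝒰_ad := {u ∈ L²_𝔽(0,T;R^l) : u(t,ω) ∈ U for λ×P-a.e. (t,ω)}. Let ū ∈ 𝒰_ad and let F : [0,T]×Ω → R^l be a ℬ([0,T])⊗ℱ-measurable, 𝔽-adapted process with E∫₀^T |F(t)|² dt < ∞ such that E∫₀^T ⟨F(t), v(t)⟩ dt ≥ 0 for every v ∈ T_{𝒰_ad}(ū), the adjacent cone of 𝒰_ad at ū in L²_𝔽(0,T;R^l). Then for λ×P-almost every (t,ω) ∈ [0,T]×Ω one has ⟨F(t,ω), v⟩ ≥ 0 for every v ∈ T_U(ū(t,ω)). -/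

import Mathlib

/-!
Write `m` for the progressive σ-algebra and `μ` for `λ × P`. A measurable `v ∈ L²` with
`v ∈ T_U(ū)` almost everywhere belongs to the adjacent cone of `𝒰_ad` at `ū`: a measurable
near-projection of `ū + h v` onto `U`, accurate up to `h² ‖v‖`, is an admissible competitor, and
dominated convergence applies to the distance divided by `h`. So it remains to find, if the
conclusion fails, such a `v` with `∫ ⟪F, v⟫ < 0`.

No null sets may be added to `m`, so `v` has to be `m`-measurable everywhere. This is possible
because `T_U(x)` is the zero set of the upper limit of `dist(x + h w, U) / h` as `h → 0⁺`, which is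
Borel in `x` and `1`-Lipschitz in `w`. Normalising `⟪F, w⟫ ≤ -1` (the cone is invariant under
positive scaling) and restricting to a ball, the `w` violating the conclusion are the zeros in a
compact set of a function that is measurable in the point and continuous in `w`. These zeros have
a measurable selection `s`; then `v = ‖F‖ s`, extended by `0`, is square-integrable and
`⟪F, v⟫ < 0` wherever `v ≠ 0`.
-/
open MeasureTheory Filter Set
open scoped ENNReal RealInnerProductSpace

/-- The adjacent cone of a set `K` at a point `x`:
`T_K(x) := {v : lim_{h→0⁺} dist(x+hv, K)/h = 0}`. -/
def adjacentCone {X : Type*} [NormedAddCommGroup X] [NormedSpace ℝ X]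
    (K : Set X) (x : X) : Set X :=
  {v | Tendsto (fun h : ℝ => Metric.infDist (x + h • v) K / h)
        (nhdsWithin 0 (Set.Ioi 0)) (nhds 0)}

/-- The progressive σ-algebra
`𝒢 := {A ∈ ℬ([0,T]) ⊗ ℱ : A_t ∈ ℱ_t for every t ∈ [0,T]}` on `[0,T] × Ω`. -/
def progSigma (T : ℝ) (Ω : Type*) [mΩ : MeasurableSpace Ω]
    (F : ℝ → MeasurableSpace Ω) : MeasurableSpace (Set.Icc (0 : ℝ) T × Ω) where
  MeasurableSet' A := MeasurableSet A ∧
    ∀ t : Set.Icc (0 : ℝ) T, MeasurableSet[F t.1] {ω : Ω | (t, ω) ∈ A}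
  measurableSet_empty :=
    ⟨MeasurableSet.empty, fun t => by simp⟩
  measurableSet_compl := fun A hA =>
    ⟨hA.1.compl, fun t => by
      have : {ω : Ω | (t, ω) ∈ Aᶜ} = {ω : Ω | (t, ω) ∈ A}ᶜ := rfl
      rw [this]; exact (hA.2 t).compl⟩
  measurableSet_iUnion := fun s hs =>
    ⟨MeasurableSet.iUnion fun n => (hs n).1, fun t => by
      have : {ω : Ω | (t, ω) ∈ ⋃ n, s n} = ⋃ n, {ω : Ω | (t, ω) ∈ s n} := by
        ext ω; simp
      rw [this]; exact MeasurableSet.iUnion fun n => (hs n).2 t⟩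

/-- Lebesgue measure on `[0, T]`, viewed as a subtype of `ℝ`. -/
noncomputable def lebIcc (T : ℝ) : Measure (Set.Icc (0 : ℝ) T) :=
  Measure.comap Subtype.val volume

/-- The space `L²_𝔽(0,T;ℝ^l)` of `𝒢`-measurable processes `y` with
`E ∫₀ᵀ |y(t)|² dt < ∞`, as a set of functions on `[0,T] × Ω`. -/
def L2Adapted (T : ℝ) (Ω : Type*) [mΩ : MeasurableSpace Ω]
    (F : ℝ → MeasurableSpace Ω) (P : Measure Ω) (l : ℕ) :
    Set (Set.Icc (0 : ℝ) T × Ω → EuclideanSpace ℝ (Fin l)) :=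
  {y | Measurable[progSigma T Ω F] y ∧ eLpNorm y 2 ((lebIcc T).prod P) < ⊤}

/-- The admissible set `𝒰_ad := {u ∈ L²_𝔽 : u(t,ω) ∈ U, λ×P-a.e.}`. -/
def Uad (T : ℝ) (Ω : Type*) [mΩ : MeasurableSpace Ω]
    (F : ℝ → MeasurableSpace Ω) (P : Measure Ω) {l : ℕ}
    (U : Set (EuclideanSpace ℝ (Fin l))) :
    Set (Set.Icc (0 : ℝ) T × Ω → EuclideanSpace ℝ (Fin l)) :=
  {u ∈ L2Adapted T Ω F P l | ∀ᵐ p ∂((lebIcc T).prod P), u p ∈ U}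

/-- The adjacent cone, at `u`, of a subset `S` of the space of functions `W`
(a function model of a subspace of `L²(μ)`), with respect to the `L²(μ)`-distance:
`{v ∈ W : lim_{h→0⁺} dist_{L²}(u + h v, S)/h = 0}`. -/
def adjacentConeL2 {α E : Type*} {mα : MeasurableSpace α} (μ : Measure α)
    [NormedAddCommGroup E] [NormedSpace ℝ E]
    (W S : Set (α → E)) (u : α → E) : Set (α → E) :=
  {v ∈ W | Tendsto
    (fun h : ℝ =>
      (⨅ g ∈ S, eLpNorm (fun p => (u p + h • v p) - g p) 2 μ) / ENNReal.ofReal h)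
    (nhdsWithin 0 (Set.Ioi 0)) (nhds 0)}

open TopologicalSpace Topology

section ZeroSelection

variable {α X : Type*} {mα : MeasurableSpace α} [TopologicalSpace X]

lemma measurableSet_exists_mem_eq_zero [PseudoMetrizableSpace X] {K : Set X} (hK : IsCompact K)
    {φ : α → X → ℝ≥0∞} (hm : ∀ x, Measurable fun a => φ a x) (hc : ∀ a, Continuous (φ a)) :
    MeasurableSet {a | ∃ x ∈ K, φ a x = 0} := by
  let : PseudoMetricSpace X := pseudoMetrizableSpacePseudoMetric X
  have : CompactSpace K := isCompact_iff_compactSpace.1 hK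
  obtain ⟨D, hD_count, hD_dense⟩ := exists_countable_dense K
  have : Countable D := hD_count.to_subtype
  have exists_iff_iInf (a : α) : (∃ x ∈ K, φ a x = 0) ↔ ⨅ x : D, φ a x = 0 := by
    have hφ : Continuous fun x : K => φ a x := (hc a).comp continuous_subtype_val
    rw [hD_dense.ciInf' hφ]
    constructor
    · rintro ⟨x, hxK, hx⟩
      exact le_antisymm (iInf_le_of_le ⟨x, hxK⟩ hx.le) bot_le
    · intro h
      have : Nonempty K := by
        by_contra hK
        rw [not_nonempty_iff] at hK
        rw [iInf_of_empty] at h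
        exact ENNReal.top_ne_zero h
      obtain ⟨x, -, hx⟩ := isCompact_univ.exists_isMinOn univ_nonempty hφ.continuousOn
      exact ⟨x, x.2, le_antisymm (h ▸ le_iInf fun y => hx (mem_univ y)) bot_le⟩
  simp only [exists_iff_iInf]
  exact (Measurable.iInf fun x : D => hm x) (measurableSet_singleton 0)

/-- Among the zeros choose the one minimising `i`: the resulting map satisfies `i (s a) ≤ c` iff
`φ a` vanishes somewhere on the compact set `{i ≤ c}`. -/
lemma exists_measurable_forall_eq_zero_of_injective [CompactSpace X] [MeasurableSpace X]
    [BorelSpace X] {i : X → ℝ} (hi : Continuous i) (hinj : i.Injective)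
    {φ : α → X → ℝ≥0∞} (hm : ∀ x, Measurable fun a => φ a x) (hc : ∀ a, Continuous (φ a))
    (hzero : ∀ a, ∃ x, φ a x = 0) :
    ∃ s : α → X, Measurable s ∧ ∀ a, φ a (s a) = 0 := by
  have hi_emb : IsClosedEmbedding i := hi.isClosedEmbedding hinj
  have : MetrizableSpace X := hi_emb.isEmbedding.metrizableSpace
  have exists_min (a : α) : ∃ x, φ a x = 0 ∧ ∀ y, φ a y = 0 → i x ≤ i y :=
    (isClosed_singleton.preimage (hc a)).isCompact.exists_isMinOn (hzero a) hi.continuousOn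
  choose s hs hs_min using exists_min
  refine ⟨s, ?_, hs⟩
  rw [← hi_emb.measurableEmbedding.measurable_comp_iff]
  refine measurable_of_Iic fun c => ?_
  have sublevel_eq : i ∘ s ⁻¹' Iic c = {a | ∃ x ∈ {x | i x ≤ c}, φ a x = 0} := by
    ext a
    exact ⟨fun h => ⟨s a, h, hs a⟩, fun ⟨x, hxc, hx⟩ => (hs_min a x hx).trans hxc⟩
  rw [sublevel_eq]
  exact measurableSet_exists_mem_eq_zero (isClosed_le hi continuous_const).isCompact hm hc

/-- The compact set is a continuous image of the Cantor set, which embeds into `ℝ`. -/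
lemma exists_measurable_mem_eq_zero [MetrizableSpace X] [MeasurableSpace X]
    [BorelSpace X] {K : Set X} (hK : IsCompact K) (hne : K.Nonempty)
    {φ : α → X → ℝ≥0∞} (hm : ∀ x, Measurable fun a => φ a x) (hc : ∀ a, Continuous (φ a)) :
    ∃ s : α → X, Measurable s ∧ (∀ a, s a ∈ K) ∧ ∀ a, (∃ x ∈ K, φ a x = 0) → φ a (s a) = 0 := by
  let : MetricSpace X := metrizableSpaceMetric X
  have : CompactSpace K := isCompact_iff_compactSpace.1 hK
  have : Nonempty K := hne.to_subtype
  obtain ⟨f, hf, hf_surj⟩ := exists_nat_bool_continuous_surjective_of_compact K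
  let B : Set α := {a | ∃ x ∈ K, φ a x = 0}
  have hB : MeasurableSet B := measurableSet_exists_mem_eq_zero hK hm hc
  have exists_zero_param (a : B) : ∃ c, φ a (f c) = 0 := by
    obtain ⟨x, hxK, hx⟩ := a.2
    obtain ⟨c, hc⟩ := hf_surj ⟨x, hxK⟩
    exact ⟨c, hc ▸ hx⟩
  obtain ⟨c, hc_meas, hc_zero⟩ := exists_measurable_forall_eq_zero_of_injective
    (continuous_subtype_val.comp cantorSetHomeomorphNatToBool.symm.continuous)
    (Subtype.val_injective.comp cantorSetHomeomorphNatToBool.symm.injective)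
    (fun y => (hm (f y)).comp measurable_subtype_coe)
    (fun a : B => (hc a).comp (continuous_subtype_val.comp hf)) exists_zero_param
  obtain ⟨s, hs, hsc⟩ := (MeasurableEmbedding.subtype_coe hB).exists_measurable_extend
    (hf.measurable.comp hc_meas) fun _ => ‹Nonempty K›
  refine ⟨fun a => s a, measurable_subtype_coe.comp hs, fun a => (s a).2, fun a ha => ?_⟩
  have hsa : s a = f (c ⟨a, ha⟩) := congrFun hsc ⟨a, ha⟩
  change φ a (s a) = 0
  rw [hsa]
  exact hc_zero ⟨a, ha⟩

end ZeroSelection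

section AdjacentCone

lemma measurable_limsup_of_lowerSemicontinuous {ι X : Type*} [TopologicalSpace X]
    [MeasurableSpace X] [OpensMeasurableSpace X] {l : Filter ι} [l.IsCountablyGenerated]
    {f : ι → X → ℝ≥0∞} (hf : ∀ᶠ i in l, LowerSemicontinuous (f i)) :
    Measurable fun x => limsup (fun i => f i x) l := by
  obtain ⟨s, hs, hbasis⟩ := (l.basis_sets.restrict_subset hf).exists_antitone_subbasis
  simp only [hbasis.toHasBasis.limsup_eq_iInf_iSup, iInf_true]
  refine Measurable.iInf fun n => LowerSemicontinuous.measurable ?_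
  exact lowerSemicontinuous_biSup (p := fun i => i ∈ s n) (f := fun i _ x => f i x)
    fun i hi => (hs n).2 hi

variable {E : Type*} [NormedAddCommGroup E] [NormedSpace ℝ E]

/-- The upper limit of `dist(x + h v, U) / h` as `h → 0⁺`, a gauge of how far `v` is from being
tangent to `U` at `x`. It takes values in `[0, ∞]` to be defined without boundedness conditions. -/
noncomputable def tangentDefect (U : Set E) (x v : E) : ℝ≥0∞ :=
  limsup (fun h : ℝ => Metric.infEDist (x + h • v) U / ENNReal.ofReal h) (𝓝[>] 0)

lemma measurable_tangentDefect [MeasurableSpace E] [OpensMeasurableSpace E] (U : Set E) (v : E) :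
    Measurable fun x => tangentDefect U x v := by
  refine measurable_limsup_of_lowerSemicontinuous ?_
  filter_upwards [self_mem_nhdsWithin] with h hh
  refine Continuous.lowerSemicontinuous ?_
  exact (ENNReal.continuous_div_const _ (ENNReal.ofReal_pos.2 hh).ne').comp
    (Metric.continuous_infEDist.comp (continuous_id.add continuous_const))

lemma tangentDefect_le_add_edist (U : Set E) (x v w : E) :
    tangentDefect U x v ≤ tangentDefect U x w + edist v w := by
  unfold tangentDefect
  rw [← limsup_add_const _ _ _ (by isBoundedDefault) (by isBoundedDefault)]
  refine limsup_le_limsup ?_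
  filter_upwards [self_mem_nhdsWithin] with h hh
  have hh0 : ENNReal.ofReal h ≠ 0 := (ENNReal.ofReal_pos.2 hh).ne'
  have hdist : edist (x + h • v) (x + h • w) = ENNReal.ofReal h * edist v w := by
    rw [edist_add_left, edist_smul₀, ← Real.enorm_of_nonneg (le_of_lt hh), ENNReal.smul_def,
      smul_eq_mul]
    rfl
  calc Metric.infEDist (x + h • v) U / ENNReal.ofReal h
      ≤ (Metric.infEDist (x + h • w) U + ENNReal.ofReal h * edist v w) / ENNReal.ofReal h := by
        gcongr
        exact hdist ▸ Metric.infEDist_le_infEDist_add_edist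
    _ = Metric.infEDist (x + h • w) U / ENNReal.ofReal h + edist v w := by
        rw [ENNReal.add_div, mul_comm, ENNReal.mul_div_cancel_right hh0 ENNReal.ofReal_ne_top]

lemma continuous_tangentDefect (U : Set E) (x : E) : Continuous (tangentDefect U x) :=
  continuous_of_le_add_edist 1 ENNReal.one_ne_top fun v w => by
    simpa only [one_mul] using tangentDefect_le_add_edist U x v w

lemma mem_adjacentCone_iff_tendsto_infEDist {U : Set E} (hU : U.Nonempty) {x v : E} :
    v ∈ adjacentCone U x ↔
      Tendsto (fun h : ℝ => Metric.infEDist (x + h • v) U / ENNReal.ofReal h) (𝓝[>] 0)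
        (𝓝 0) := by
  have ofReal_quotient : (fun h : ℝ => ENNReal.ofReal (Metric.infDist (x + h • v) U / h))
      =ᶠ[𝓝[>] 0] fun h => Metric.infEDist (x + h • v) U / ENNReal.ofReal h := by
    filter_upwards [self_mem_nhdsWithin] with h hh
    rw [ENNReal.ofReal_div_of_pos hh, Metric.infDist,
      ENNReal.ofReal_toReal (Metric.infEDist_ne_top hU)]
  have toReal_quotient : (fun h : ℝ => (ENNReal.ofReal (Metric.infDist (x + h • v) U / h)).toReal)
      =ᶠ[𝓝[>] 0] fun h => Metric.infDist (x + h • v) U / h := by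
    filter_upwards [self_mem_nhdsWithin] with h hh
    exact ENNReal.toReal_ofReal (div_nonneg Metric.infDist_nonneg (le_of_lt hh))
  rw [← tendsto_congr' ofReal_quotient,
    ← ENNReal.tendsto_toReal_zero_iff fun _ => ENNReal.ofReal_ne_top,
    tendsto_congr' toReal_quotient]
  rfl

lemma tangentDefect_eq_zero_iff {U : Set E} (hU : U.Nonempty) {x v : E} :
    tangentDefect U x v = 0 ↔ v ∈ adjacentCone U x := by
  rw [mem_adjacentCone_iff_tendsto_infEDist hU]
  exact ⟨fun h => tendsto_of_le_liminf_of_limsup_le bot_le h.le, fun h => h.limsup_eq⟩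

lemma zero_mem_adjacentCone {U : Set E} {x : E} (hx : x ∈ U) : (0 : E) ∈ adjacentCone U x := by
  simp [adjacentCone, Metric.infDist_zero_of_mem hx]

lemma smul_mem_adjacentCone {U : Set E} {x v : E} (hv : v ∈ adjacentCone U x) {c : ℝ}
    (hc : 0 < c) : c • v ∈ adjacentCone U x := by
  have hscale : Tendsto (fun h : ℝ => h * c) (𝓝[>] 0) (𝓝[>] 0) := by
    refine tendsto_nhdsWithin_iff.2 ⟨?_, ?_⟩
    · exact (Continuous.tendsto' (by fun_prop) 0 0 (zero_mul c)).mono_left nhdsWithin_le_nhds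
    · filter_upwards [self_mem_nhdsWithin] with h hh using mul_pos hh hc
  have hlim : Tendsto (fun h : ℝ => c * (Metric.infDist (x + (h * c) • v) U / (h * c)))
      (𝓝[>] 0) (𝓝 0) := by
    simpa only [mul_zero, Function.comp_def] using (hv.comp hscale).const_mul c
  refine hlim.congr' ?_
  filter_upwards [self_mem_nhdsWithin] with h hh
  have hh0 : h ≠ 0 := ne_of_gt hh
  rw [mul_smul]
  field_simp

end AdjacentCone

section SquareIntegrableSelections

lemma tendsto_eLpNorm_zero_of_dominated {ι α ε : Type*} {mα : MeasurableSpace α} {μ : Measure α}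
    [ENorm ε] {l : Filter ι} [l.IsCountablyGenerated] {p : ℝ≥0∞} (hp : p ≠ ∞)
    {f : ι → α → ε} {g : α → ℝ≥0∞} (hf : ∀ᶠ i in l, AEMeasurable (fun a => ‖f i a‖ₑ) μ)
    (hfg : ∀ᶠ i in l, ∀ᵐ a ∂μ, ‖f i a‖ₑ ≤ g a) (hg : eLpNorm g p μ ≠ ∞)
    (hlim : ∀ᵐ a ∂μ, Tendsto (fun i => ‖f i a‖ₑ) l (𝓝 0)) :
    Tendsto (fun i => eLpNorm (f i) p μ) l (𝓝 0) := by
  rcases eq_or_ne p 0 with rfl | hp0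
  · simpa only [eLpNorm_exponent_zero] using tendsto_const_nhds
  have hp_pos : 0 < p.toReal := ENNReal.toReal_pos hp0 hp
  have hg_int : ∫⁻ a, g a ^ p.toReal ∂μ ≠ ∞ := by
    simpa only [enorm_eq_self] using
      (lintegral_rpow_enorm_lt_top_of_eLpNorm_lt_top hp0 hp hg.lt_top).ne
  have hint : Tendsto (fun i => ∫⁻ a, ‖f i a‖ₑ ^ p.toReal ∂μ) l (𝓝 0) := by
    rw [← lintegral_zero (μ := μ)]
    refine tendsto_lintegral_filter_of_dominated_convergence' (fun a => g a ^ p.toReal)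
      (hf.mono fun i hi => hi.pow_const _) ?_ hg_int ?_
    · filter_upwards [hfg] with i hi
      filter_upwards [hi] with a ha using ENNReal.rpow_le_rpow ha hp_pos.le
    · filter_upwards [hlim] with a ha
      simpa only [ENNReal.zero_rpow_of_pos hp_pos] using ha.ennrpow_const p.toReal
  simp only [eLpNorm_eq_lintegral_rpow_enorm_toReal hp0 hp]
  simpa only [ENNReal.zero_rpow_of_pos (one_div_pos.2 hp_pos)] using
    hint.ennrpow_const (1 / p.toReal)

lemma exists_measurable_mem_edist_le {α X : Type*} {mα : MeasurableSpace α}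
    [PseudoMetricSpace X] [SecondCountableTopology X] [MeasurableSpace X] [OpensMeasurableSpace X]
    {U : Set X} (hU : U.Nonempty) {y : α → X} (hy : Measurable y) {η : α → ℝ≥0∞}
    (hη : Measurable η) :
    ∃ z : α → X, Measurable z ∧ (∀ a, z a ∈ U) ∧
      ∀ a, η a ≠ 0 → edist (y a) (z a) ≤ Metric.infEDist (y a) U + η a := by
  classical
  have : Nonempty U := hU.to_subtype
  have exists_close (a : α) :
      ∃ n, η a = 0 ∨ edist (y a) (denseSeq U n) < Metric.infEDist (y a) U + η a := by
    by_cases ha : η a = 0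
    · exact ⟨0, .inl ha⟩
    obtain ⟨w, hwU, hw⟩ := Metric.infEDist_lt_iff.1
      (ENNReal.lt_add_right (Metric.infEDist_ne_top hU) ha)
    have hopen : IsOpen {x : U | edist (y a) x < Metric.infEDist (y a) U + η a} :=
      isOpen_lt (continuous_const.edist continuous_subtype_val) continuous_const
    obtain ⟨n, hn⟩ := (denseRange_denseSeq U).exists_mem_open hopen ⟨⟨w, hwU⟩, hw⟩
    exact ⟨n, .inr hn⟩
  refine ⟨fun a => denseSeq U (Nat.find (exists_close a)), ?_, fun a => Subtype.coe_prop _,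
    fun a ha => ((Nat.find_spec (exists_close a)).resolve_left ha).le⟩
  refine Measurable.find (f := fun n _ => (denseSeq U n : X)) (fun n => measurable_const)
    (fun n => ?_) exists_close
  exact (hη (measurableSet_singleton 0)).union
    (measurableSet_lt (hy.edist measurable_const) (hy.infEDist.add hη))

variable {α E : Type*} [NormedAddCommGroup E] [MeasurableSpace E]

/-- The square-integrable functions that are measurable with respect to a sub-σ-algebra `m`, as
genuine functions rather than almost-everywhere classes; with `m` the progressive σ-algebra this
is `L²_𝔽`. -/
def measurableL2 (E : Type*) [NormedAddCommGroup E] [MeasurableSpace E] (m : MeasurableSpace α)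
    {_ : MeasurableSpace α} (μ : Measure α) : Set (α → E) :=
  {y | Measurable[m] y ∧ eLpNorm y 2 μ < ⊤}

/-- The members of `measurableL2 E m μ` with values in `U` almost everywhere; with `m` the
progressive σ-algebra this is `𝒰_ad`. -/
def constrainedL2 (m : MeasurableSpace α) {_ : MeasurableSpace α} (μ : Measure α) (U : Set E) :
    Set (α → E) :=
  {u ∈ measurableL2 E m μ | ∀ᵐ a ∂μ, u a ∈ U}

variable {m m0 : MeasurableSpace α} {μ : Measure α} [BorelSpace E] [SecondCountableTopology E]

lemma memLp_of_mem_measurableL2 (hm : m ≤ m0) {y : α → E} (hy : y ∈ measurableL2 E m μ) :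
    MemLp y 2 μ :=
  ⟨(hy.1.mono hm le_rfl).aestronglyMeasurable, hy.2⟩

/-- Off the zero set of `η` the competitor is a measurable near-projection of `y` onto `U`; on it,
`y` itself. -/
lemma iInf_constrainedL2_eLpNorm_sub_le (hm : m ≤ m0) {U : Set E} (hU : U.Nonempty) {y : α → E}
    (hy : y ∈ measurableL2 E m μ) {η : α → ℝ≥0∞} (hη : Measurable[m] η)
    (hηU : ∀ᵐ a ∂μ, η a = 0 → y a ∈ U) :
    ⨅ g ∈ constrainedL2 m μ U, eLpNorm (fun a => y a - g a) 2 μ ≤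
      eLpNorm (fun a => Metric.infEDist (y a) U + η a) 2 μ := by
  classical
  obtain ⟨z, hz, hzU, hyz⟩ := exists_measurable_mem_edist_le hU hy.1 hη
  let g : α → E := {a | η a = 0}.piecewise y z
  have hg : Measurable[m] g := hy.1.piecewise (hη (measurableSet_singleton 0)) hz
  have hgU : ∀ᵐ a ∂μ, g a ∈ U := by
    filter_upwards [hηU] with a ha
    by_cases h : η a = 0
    · simpa [g, h] using ha h
    · simpa [g, h] using hzU a
  have sub_le (a : α) : ‖y a - g a‖ₑ ≤ ‖Metric.infEDist (y a) U + η a‖ₑ := by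
    rw [enorm_eq_self, ← edist_eq_enorm_sub]
    by_cases h : η a = 0
    · simp [g, h]
    · simpa [g, h] using hyz a h
  have eLpNorm_sub_le : eLpNorm (fun a => y a - g a) 2 μ ≤
      eLpNorm (fun a => Metric.infEDist (y a) U + η a) 2 μ := eLpNorm_mono_enorm sub_le
  rcases eq_top_or_lt_top (eLpNorm (fun a => Metric.infEDist (y a) U + η a) 2 μ) with htop | hfin
  · exact htop ▸ le_top
  have hdiff : MemLp (fun a => y a - g a) 2 μ :=
    ⟨((hy.1.sub hg).mono hm le_rfl).aestronglyMeasurable, eLpNorm_sub_le.trans_lt hfin⟩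
  have hgL : MemLp g 2 μ := by
    simpa only [Pi.sub_def, sub_sub_cancel] using (memLp_of_mem_measurableL2 hm hy).sub hdiff
  exact (iInf₂_le g ⟨⟨hg, hgL.2⟩, hgU⟩).trans eLpNorm_sub_le

variable [NormedSpace ℝ E]

lemma tendsto_eLpNorm_infEDist_div {U : Set E} (hU : U.Nonempty) {u v : α → E}
    (hu : AEMeasurable u μ) (huU : ∀ᵐ a ∂μ, u a ∈ U) (hv : MemLp v 2 μ)
    (hcone : ∀ᵐ a ∂μ, v a ∈ adjacentCone U (u a)) :
    Tendsto (fun h : ℝ => eLpNorm (fun a =>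
        Metric.infEDist (u a + h • v a) U / ENNReal.ofReal h + ENNReal.ofReal h * ‖v a‖ₑ) 2 μ)
      (𝓝[>] 0) (𝓝 0) := by
  have hv_meas : AEMeasurable v μ := hv.1.aemeasurable
  have hbound : eLpNorm (fun a => ‖v a‖ₑ + ‖v a‖ₑ) 2 μ ≠ ∞ := by
    refine ne_top_of_le_ne_top (ENNReal.mul_ne_top ENNReal.coe_ne_top hv.2.ne)
      (eLpNorm_le_mul_eLpNorm_of_ae_le_mul' (c := 2) (.of_forall fun a => ?_) 2)
    rw [enorm_eq_self, ENNReal.coe_ofNat, two_mul]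
  refine tendsto_eLpNorm_zero_of_dominated (by norm_num) (.of_forall fun h => ?_) ?_ hbound ?_
  · simp only [enorm_eq_self]
    exact ((measurable_infEDist.comp_aemeasurable (hu.add (hv_meas.const_smul h))).div_const _).add
      (hv_meas.enorm.const_mul _)
  · filter_upwards [Ioo_mem_nhdsGT zero_lt_one] with h hh
    filter_upwards [huU] with a ha
    rw [enorm_eq_self]
    refine add_le_add (ENNReal.div_le_of_le_mul' ?_) (mul_le_of_le_one_left' ?_)
    · calc Metric.infEDist (u a + h • v a) U
          ≤ edist (u a + h • v a) (u a) := Metric.infEDist_le_edist_of_mem ha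
        _ = ENNReal.ofReal h * ‖v a‖ₑ := by
          rw [edist_eq_enorm_sub, add_sub_cancel_left, enorm_smul, Real.enorm_of_nonneg hh.1.le]
    · exact ENNReal.ofReal_le_one.2 hh.2.le
  · filter_upwards [hcone] with a ha
    have hofReal : Tendsto ENNReal.ofReal (𝓝[>] 0) (𝓝 0) :=
      (ENNReal.continuous_ofReal.tendsto' 0 0 ENNReal.ofReal_zero).mono_left nhdsWithin_le_nhds
    have hmul := ENNReal.Tendsto.mul_const (b := ‖v a‖ₑ) hofReal (.inr enorm_ne_top)
    simpa only [enorm_eq_self, zero_mul, add_zero] using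
      ((mem_adjacentCone_iff_tendsto_infEDist hU).1 ha).add hmul

lemma mem_adjacentConeL2_of_ae_mem_adjacentCone (hm : m ≤ m0) {U : Set E} (hU : U.Nonempty)
    {u v : α → E} (hu : u ∈ constrainedL2 m μ U) (hv : v ∈ measurableL2 E m μ)
    (hcone : ∀ᵐ a ∂μ, v a ∈ adjacentCone U (u a)) :
    v ∈ adjacentConeL2 μ (measurableL2 E m μ) (constrainedL2 m μ U) u := by
  have hvL := memLp_of_mem_measurableL2 hm hv
  have hlim := tendsto_eLpNorm_infEDist_div hU (hu.1.1.mono hm le_rfl).aemeasurable hu.2 hvL hcone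
  refine ⟨hv, tendsto_of_tendsto_of_tendsto_of_le_of_le' tendsto_const_nhds hlim
    (.of_forall fun _ => bot_le) ?_⟩
  filter_upwards [self_mem_nhdsWithin] with h hh
  have hh0 : ENNReal.ofReal h ≠ 0 := (ENNReal.ofReal_pos.2 hh).ne'
  let y : α → E := fun a => u a + h • v a
  let η : α → ℝ≥0∞ := fun a => ENNReal.ofReal h * (ENNReal.ofReal h * ‖v a‖ₑ)
  have hy_meas : Measurable[m] y := hu.1.1.add (hv.1.const_smul h)
  have hy : y ∈ measurableL2 E m μ := ⟨hy_meas,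
    ((memLp_of_mem_measurableL2 hm hu.1).add (hvL.const_smul h)).2⟩
  have hη : Measurable[m] η := ((measurable_enorm.const_mul _).const_mul _).comp hv.1
  have hηU : ∀ᵐ a ∂μ, η a = 0 → y a ∈ U := by
    filter_upwards [hu.2] with a ha hηa
    have hva : v a = 0 := by simpa only [η, mul_eq_zero, hh0, enorm_eq_zero, false_or] using hηa
    simpa only [y, hva, smul_zero, add_zero] using ha
  refine ENNReal.div_le_of_le_mul' ?_
  calc ⨅ g ∈ constrainedL2 m μ U, eLpNorm (fun a => y a - g a) 2 μ
      ≤ eLpNorm (fun a => Metric.infEDist (y a) U + η a) 2 μ :=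
        iInf_constrainedL2_eLpNorm_sub_le hm hU hy hη hηU
    _ ≤ ENNReal.ofReal h * eLpNorm (fun a =>
          Metric.infEDist (y a) U / ENNReal.ofReal h + ENNReal.ofReal h * ‖v a‖ₑ) 2 μ := by
        refine eLpNorm_le_mul_eLpNorm_of_ae_le_mul' (.of_forall fun a => ?_) 2
        change _ ≤ ENNReal.ofReal h * _
        simp only [enorm_eq_self, η, mul_add]
        rw [ENNReal.mul_div_cancel hh0 ENNReal.ofReal_ne_top]

end SquareIntegrableSelections

section PointwiseCondition

lemma integrable_inner_of_memLp_two {α E : Type*} {mα : MeasurableSpace α} {μ : Measure α}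
    [NormedAddCommGroup E] [InnerProductSpace ℝ E] {f g : α → E} (hf : MemLp f 2 μ)
    (hg : MemLp g 2 μ) : Integrable (fun a => ⟪f a, g a⟫) μ := by
  refine (hf.norm.integrable_mul hg.norm).mono (hf.1.inner hg.1) (.of_forall fun a => ?_)
  simpa using norm_inner_le_norm (𝕜 := ℝ) (f a) (g a)

variable {α E : Type*} [NormedAddCommGroup E] [InnerProductSpace ℝ E] [FiniteDimensional ℝ E]
  [MeasurableSpace E] [BorelSpace E]

/-- The factor `‖F a‖` puts `v` into every function space that contains `F`. -/
lemma exists_measurable_descent_direction {mα : MeasurableSpace α} {F : α → E} (hF : Measurable F)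
    {φ : α → E → ℝ≥0∞} (hφm : ∀ w, Measurable fun a => φ a w) (hφc : ∀ a, Continuous (φ a))
    (hφ_smul : ∀ a w (c : ℝ), 0 < c → φ a w = 0 → φ a (c • w) = 0) {r : ℝ} (hr : 0 ≤ r) :
    ∃ v : α → E, Measurable v ∧ (∀ a, ‖v a‖ ≤ r * ‖F a‖) ∧
      (∀ a, v a = 0 ∨ φ a (v a) = 0 ∧ ⟪F a, v a⟫ < 0) ∧
      ∀ a, ∀ w ∈ Metric.closedBall 0 r, φ a w = 0 → ⟪F a, w⟫ ≤ -1 → v a ≠ 0 := by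
  let ψ : α → E → ℝ≥0∞ := fun a w => φ a w + ENNReal.ofReal (⟪F a, w⟫ + 1)
  have hψ_zero {a : α} {w : E} : ψ a w = 0 ↔ φ a w = 0 ∧ ⟪F a, w⟫ ≤ -1 := by
    simp only [ψ, add_eq_zero, ENNReal.ofReal_eq_zero, ← le_neg_iff_add_nonpos_right]
  have hψm (w : E) : Measurable fun a => ψ a w :=
    (hφm w).add (ENNReal.measurable_ofReal.comp ((hF.inner measurable_const).add_const 1))
  have hψc (a : α) : Continuous (ψ a) :=
    (hφc a).add (ENNReal.continuous_ofReal.comp (by fun_prop))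
  have hK : IsCompact (Metric.closedBall (0 : E) r) := isCompact_closedBall 0 r
  let B : Set α := {a | ∃ w ∈ Metric.closedBall (0 : E) r, ψ a w = 0}
  have hB : MeasurableSet B := measurableSet_exists_mem_eq_zero hK hψm hψc
  obtain ⟨s, hs, hs_mem, hs_zero⟩ := exists_measurable_mem_eq_zero hK
    (Metric.nonempty_closedBall.2 hr) hψm hψc
  let v : α → E := B.indicator fun a => ‖F a‖ • s a
  have hv_norm (a : α) : ‖v a‖ ≤ r * ‖F a‖ :=
    calc ‖v a‖ ≤ ‖‖F a‖ • s a‖ := norm_indicator_le_norm_self _ a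
      _ = ‖s a‖ * ‖F a‖ := by rw [norm_smul, norm_norm, mul_comm]
      _ ≤ r * ‖F a‖ := by gcongr; exact mem_closedBall_zero_iff.1 (hs_mem a)
  have descent {a : α} (ha : a ∈ B) : φ a (v a) = 0 ∧ ⟪F a, v a⟫ < 0 := by
    obtain ⟨hφs, hFs⟩ := hψ_zero.1 (hs_zero a ha)
    have hFa : 0 < ‖F a‖ := norm_pos_iff.2 fun h => by norm_num [h] at hFs
    rw [show v a = ‖F a‖ • s a from indicator_of_mem ha _, inner_smul_right]
    exact ⟨hφ_smul a _ _ hFa hφs, mul_neg_of_pos_of_neg hFa (hFs.trans_lt neg_one_lt_zero)⟩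
  refine ⟨v, (hF.norm.smul hs).indicator hB, hv_norm, fun a => ?_, fun a w hw hφw hFw hva => ?_⟩
  · by_cases ha : a ∈ B
    · exact .inr (descent ha)
    · exact .inl (indicator_of_notMem ha _)
  · have hneg := (descent ⟨w, hw, hψ_zero.2 ⟨hφw, hFw⟩⟩).2
    rw [hva, inner_zero_right] at hneg
    exact hneg.false

variable {m m0 : MeasurableSpace α} {μ : Measure α} (hm : m ≤ m0) {F : α → E}
  (hF : F ∈ measurableL2 E m μ) {φ : α → E → ℝ≥0∞}
  (hφm : ∀ w, Measurable[m] fun a => φ a w)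
  (hφc : ∀ a, Continuous (φ a)) (hφ0 : ∀ᵐ a ∂μ, φ a 0 = 0)
  (hφ_smul : ∀ a w (c : ℝ), 0 < c → φ a w = 0 → φ a (c • w) = 0)
  (hpos : ∀ v ∈ measurableL2 E m μ, (∀ᵐ a ∂μ, φ a (v a) = 0) → 0 ≤ ∫ a, ⟪F a, v a⟫ ∂μ)
include hm hF hφm hφc hφ0 hφ_smul hpos

lemma ae_forall_mem_closedBall_neg_one_lt_inner {r : ℝ} (hr : 0 ≤ r) :
    ∀ᵐ a ∂μ, ∀ w ∈ Metric.closedBall (0 : E) r, φ a w = 0 → -1 < ⟪F a, w⟫ := by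
  obtain ⟨v, hv_meas, hv_norm, hv_descent, hv_ne⟩ :=
    exists_measurable_descent_direction hF.1 hφm hφc hφ_smul hr
  have hFL : MemLp F 2 μ := memLp_of_mem_measurableL2 hm hF
  have hvL : MemLp v 2 μ := hFL.of_le_mul
    (hv_meas.mono hm le_rfl).aestronglyMeasurable (.of_forall hv_norm)
  have hφv : ∀ᵐ a ∂μ, φ a (v a) = 0 := by
    filter_upwards [hφ0] with a ha
    rcases hv_descent a with hva | ⟨hva, -⟩
    · rwa [hva]
    · exact hva
  have inner_nonpos (a : α) : ⟪F a, v a⟫ ≤ 0 := by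
    rcases hv_descent a with hva | ⟨-, hva⟩
    · rw [hva, inner_zero_right]
    · exact hva.le
  have integral_eq_zero : ∫ a, ⟪F a, v a⟫ ∂μ = 0 :=
    (integral_nonpos inner_nonpos).antisymm (hpos v ⟨hv_meas, hvL.2⟩ hφv)
  have inner_eq_zero : ∀ᵐ a ∂μ, ⟪F a, v a⟫ = 0 :=
    (integral_eq_iff_of_ae_le (integrable_inner_of_memLp_two hFL hvL)
      (integrable_zero α ℝ μ) (.of_forall inner_nonpos)).1
      (integral_eq_zero.trans (integral_zero α ℝ).symm)
  filter_upwards [inner_eq_zero] with a ha w hw hφw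
  by_contra! hFw
  exact (hv_descent a).elim (hv_ne a w hw hφw hFw) fun h => h.2.ne ha

lemma ae_forall_inner_nonneg : ∀ᵐ a ∂μ, ∀ w, φ a w = 0 → 0 ≤ ⟪F a, w⟫ := by
  have hball (n : ℕ) := ae_forall_mem_closedBall_neg_one_lt_inner hm hF hφm hφc hφ0 hφ_smul hpos
    n.cast_nonneg
  filter_upwards [ae_all_iff.2 hball] with a ha w hw
  by_contra! hneg
  have hc : 0 < (-⟪F a, w⟫)⁻¹ := inv_pos.2 (neg_pos.2 hneg)
  obtain ⟨n, hn⟩ := exists_nat_ge ‖(-⟪F a, w⟫)⁻¹ • w‖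
  have hlt := ha n _ (mem_closedBall_zero_iff.2 hn) (hφ_smul a w _ hc hw)
  rw [inner_smul_right, ← div_eq_inv_mul, div_neg, div_self hneg.ne] at hlt
  exact hlt.false

end PointwiseCondition

lemma progSigma_le (T : ℝ) {Ω : Type*} [MeasurableSpace Ω] (F : ℝ → MeasurableSpace Ω) :
    progSigma T Ω F ≤ (inferInstance : MeasurableSpace (Set.Icc (0 : ℝ) T × Ω)) :=
  fun _ hA => hA.1

theorem pointwise_of_integral_necessary_condition_general {α E : Type*}
    {m m0 : MeasurableSpace α} {μ : Measure α} [NormedAddCommGroup E] [InnerProductSpace ℝ E]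
    [FiniteDimensional ℝ E] [MeasurableSpace E] [BorelSpace E] (hm : m ≤ m0) {U : Set E}
    {u F : α → E} (hu : u ∈ constrainedL2 m μ U) (hF : F ∈ measurableL2 E m μ)
    (hpos : ∀ v ∈ adjacentConeL2 μ (measurableL2 E m μ) (constrainedL2 m μ U) u,
      0 ≤ ∫ a, ⟪F a, v a⟫ ∂μ) :
    ∀ᵐ a ∂μ, ∀ v ∈ adjacentCone U (u a), 0 ≤ ⟪F a, v⟫ := by
  rcases eq_zero_or_neZero μ with rfl | hμ
  · simp only [ae_zero, eventually_bot]
  obtain ⟨a₀, ha₀⟩ := hu.2.exists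
  have hU : U.Nonempty := ⟨u a₀, ha₀⟩
  simp only [← tangentDefect_eq_zero_iff hU]
  refine ae_forall_inner_nonneg hm hF (fun w => (measurable_tangentDefect U w).comp hu.1.1)
    (fun a => continuous_tangentDefect U (u a)) ?_ (fun a w c hc => ?_) fun v hv hcone => ?_
  · filter_upwards [hu.2] with a ha
    exact (tangentDefect_eq_zero_iff hU).2 (zero_mem_adjacentCone ha)
  · simpa only [tangentDefect_eq_zero_iff hU] using fun hw => smul_mem_adjacentCone hw hc
  · simp only [tangentDefect_eq_zero_iff hU] at hcone
    exact hpos v (mem_adjacentConeL2_of_ae_mem_adjacentCone hm hU hu hv hcone)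

/-- Pointwise necessary condition from the integral one: if `ū ∈ 𝒰_ad` and `F` is a
measurable adapted square-integrable process with `E ∫₀ᵀ ⟨F(t), v(t)⟩ dt ≥ 0` for every
`v` in the adjacent cone `T_{𝒰_ad}(ū)` (in `L²_𝔽(0,T;ℝ^l)`), then for `λ×P`-a.e.
`(t,ω)` one has `⟨F(t,ω), v⟩ ≥ 0` for every `v ∈ T_U(ū(t,ω))`. -/
theorem pointwise_of_integral_necessary_condition
    (T : ℝ) (hT : 0 < T) {Ω : Type*} [mΩ : MeasurableSpace Ω]
    (P : Measure Ω) [IsProbabilityMeasure P] (hPc : P.IsComplete)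
    (F : ℝ → MeasurableSpace Ω)
    (hFle : ∀ t : ℝ, F t ≤ mΩ)
    (hFmono : ∀ s t : ℝ, s ≤ t → F s ≤ F t)
    {l : ℕ} (U : Set (EuclideanSpace ℝ (Fin l))) (hUcl : IsClosed U)
    (hUne : U.Nonempty)
    (ubar : Set.Icc (0 : ℝ) T × Ω → EuclideanSpace ℝ (Fin l))
    (hubar : ubar ∈ Uad T Ω F P U)
    (Ff : Set.Icc (0 : ℝ) T × Ω → EuclideanSpace ℝ (Fin l))
    (hFfmeas : Measurable Ff)
    (hFfadapted : ∀ t : Set.Icc (0 : ℝ) T,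
      Measurable[F t.1] fun ω : Ω => Ff (t, ω))
    (hFfint : eLpNorm Ff 2 ((lebIcc T).prod P) < ⊤)
    (hpos : ∀ v ∈ adjacentConeL2 ((lebIcc T).prod P)
        (L2Adapted T Ω F P l) (Uad T Ω F P U) ubar,
      0 ≤ ∫ p, ⟪Ff p, v p⟫ ∂((lebIcc T).prod P)) :
    ∀ᵐ p ∂((lebIcc T).prod P), ∀ v ∈ adjacentCone U (ubar p), 0 ≤ ⟪Ff p, v⟫ :=
  pointwise_of_integral_necessary_condition_general (progSigma_le T F) hubar
    ⟨fun _ hs => ⟨hFfmeas hs, fun t => hFfadapted t hs⟩, hFfint⟩ hpos
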